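/- Let M ≥ 2 and N ≥ 1 be integers, μ, φ real, σ > 0 real, and let s_0 ∈ ℝ^N be a nonzero real vector with empirical power P = ‖s_0‖²/N. Let v ∈ ℂ^{2M} be the vector defined from M, μ, φ via the single-source ESPRIT error computation (i.e., v^T = (√(2M)/(2(M−1)))·(a^{nc})^H·(J_1^{nc})^T·(e^{−iμ}·J_2^{nc} − J_1^{nc})·P⊥ with a^{nc} = [a ; e^{−2iφ}·Π_M·conj(a)], a_k = e^{ikμ}, maximum-overlap selection matrices J_1 = [I_{M−1} | 0], J_2 = [0 | I_{M−1}], J_1^{nc} = blkdiag(J_1, Π_{M−1}·J_2·Π_M), J_2^{nc} = blkdiag(J_2, Π_{M−1}·J_1·Π_M), and P⊥ = I_{2M} − (1/(2M))·a^{nc}·(a^{nc})^H), and let s̃ = conj(e^{iφ}·s_0)/(√(2M·N·P)·√(N·P)) ∈ ℂ^N. Then the mean squared error of 1-D NC Standard ESPRIT for a single strictly non-circular source in circularly symmetric white noise of variance σ², given by (σ²/2)·(‖s̃‖²·‖v‖² − Re{(s̃^T·s̃)·(v^T·Π_{2M}·v)}), equals (σ²/(N·P))·1/(M−1)², i.e.,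 the reciprocal effective SNR times M/(M·(M−1)²). -/

import Mathlib

open Matrix Complex

/-- The `n × n` exchange matrix with ones on the antidiagonal and zeros elsewhere. -/
def exchg (R : Type*) [Zero R] [One R] (n : ℕ) : Matrix (Fin n) (Fin n) R :=
  Matrix.of fun i j => if (i : ℕ) + (j : ℕ) = n - 1 then (1 : R) else 0

/-- The ULA steering vector `a ∈ ℂ^M` with entries `a_k = e^{i k μ}`, as a column. -/
noncomputable def avec (M : ℕ) (μ : ℝ) : Matrix (Fin M) (Fin 1) ℂ :=
  Matrix.of fun k _ => Complex.exp (Complex.I * ((k : ℕ) : ℂ) * (μ : ℂ))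

/-- The augmented steering vector `a^{nc} = [a ; e^{−2iφ} Π_M conj(a)] ∈ ℂ^{2M}`. -/
noncomputable def ancvec (M : ℕ) (μ φ : ℝ) : Matrix (Fin M ⊕ Fin M) (Fin 1) ℂ :=
  Matrix.fromRows (avec M μ)
    (Complex.exp (-(2 * (φ : ℂ) * Complex.I)) • (exchg ℂ M * (avec M μ).map (starRingEnd ℂ)))

/-- The maximum-overlap selection matrix `J₁ = [I_{M−1} | 0]`. -/
def Jsel1 (M : ℕ) : Matrix (Fin (M - 1)) (Fin M) ℂ :=
  Matrix.of fun i j => if (j : ℕ) = (i : ℕ) then 1 else 0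

/-- The maximum-overlap selection matrix `J₂ = [0 | I_{M−1}]`. -/
def Jsel2 (M : ℕ) : Matrix (Fin (M - 1)) (Fin M) ℂ :=
  Matrix.of fun i j => if (j : ℕ) = (i : ℕ) + 1 then 1 else 0

/-- The augmented selection matrix `J₁^{nc} = blkdiag(J₁, Π_{M−1} J₂ Π_M)`. -/
noncomputable def J1nc (M : ℕ) : Matrix (Fin (M - 1) ⊕ Fin (M - 1)) (Fin M ⊕ Fin M) ℂ :=
  Matrix.fromBlocks (Jsel1 M) 0 0 (exchg ℂ (M - 1) * Jsel2 M * exchg ℂ M)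

/-- The augmented selection matrix `J₂^{nc} = blkdiag(J₂, Π_{M−1} J₁ Π_M)`. -/
noncomputable def J2nc (M : ℕ) : Matrix (Fin (M - 1) ⊕ Fin (M - 1)) (Fin M ⊕ Fin M) ℂ :=
  Matrix.fromBlocks (Jsel2 M) 0 0 (exchg ℂ (M - 1) * Jsel1 M * exchg ℂ M)

/-- The orthogonal projection `P⊥ = I_{2M} − (1/(2M)) a^{nc} (a^{nc})ᴴ`. -/
noncomputable def Pperp (M : ℕ) (μ φ : ℝ) : Matrix (Fin M ⊕ Fin M) (Fin M ⊕ Fin M) ℂ :=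
  1 - ((1 : ℂ) / (2 * (M : ℂ))) • (ancvec M μ φ * (ancvec M μ φ)ᴴ)

/-- The row vector
`vᵀ = (√(2M)/(2(M−1))) (a^{nc})ᴴ (J₁^{nc})ᵀ (e^{−iμ} J₂^{nc} − J₁^{nc}) P⊥ ∈ ℂ^{1×2M}`
from the single-source ESPRIT error computation. -/
noncomputable def vT (M : ℕ) (μ φ : ℝ) : Matrix (Fin 1) (Fin M ⊕ Fin M) ℂ :=
  (((Real.sqrt (2 * M) : ℝ) : ℂ) / (2 * ((M : ℂ) - 1))) •
    ((ancvec M μ φ)ᴴ * (J1nc M)ᵀ *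
      (Complex.exp (-(Complex.I * (μ : ℂ))) • J2nc M - J1nc M) * Pperp M μ φ)

/-- The `2M × 2M` exchange matrix `Π_{2M}`, represented on the index type
`Fin M ⊕ Fin M` as the block matrix `[[0, Π_M],[Π_M, 0]]`. -/
def Pi2M (M : ℕ) : Matrix (Fin M ⊕ Fin M) (Fin M ⊕ Fin M) ℂ :=
  Matrix.fromBlocks 0 (exchg ℂ M) (exchg ℂ M) 0

/-- The normalized conjugated symbol vector
`s̃ = conj(e^{iφ} s₀)/(√(2 M N P) √(N P)) ∈ ℂ^N`. -/
noncomputable def stilde (M N : ℕ) (φ : ℝ) (P : ℝ) (s0 : Fin N → ℝ) : Fin N → ℂ :=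
  fun t => (starRingEnd ℂ) (Complex.exp (Complex.I * (φ : ℂ)) * ((s0 t : ℝ) : ℂ)) /
    (((Real.sqrt (2 * M * N * P) * Real.sqrt (N * P) : ℝ) : ℂ))

lemma exchg_apply' (n : ℕ) (i j : Fin n) :
    exchg ℂ n i j = if i.rev = j then 1 else 0 := by
  unfold exchg
  simp only [Matrix.of_apply]
  congr 1
  rw [Fin.ext_iff, Fin.val_rev]
  apply propext
  have := i.2
  have := j.2
  omega

lemma exchg_mul_apply {n : ℕ} {κ : Type*} (A : Matrix (Fin n) κ ℂ) (i : Fin n) (j : κ) :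
    (exchg ℂ n * A) i j = A i.rev j := by
  simp [Matrix.mul_apply, exchg_apply']

lemma mul_exchg_apply {n : ℕ} {κ : Type*} (A : Matrix κ (Fin n) ℂ) (i : κ) (j : Fin n) :
    (A * exchg ℂ n) i j = A i j.rev := by
  have h : ∀ k : Fin n, (k.rev = j) = (k = j.rev) := fun k => by
    rw [Fin.rev_eq_iff]
  simp [Matrix.mul_apply, exchg_apply', h]

lemma flip_Jsel2 (M : ℕ) :
    exchg ℂ (M - 1) * Jsel2 M * exchg ℂ M = Jsel1 M := by
  ext i j
  rw [mul_exchg_apply, exchg_mul_apply]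
  simp only [Jsel1, Jsel2, Matrix.of_apply, Fin.val_rev]
  congr 1
  apply propext
  have := i.2
  have := j.2
  omega

lemma flip_Jsel1 (M : ℕ) :
    exchg ℂ (M - 1) * Jsel1 M * exchg ℂ M = Jsel2 M := by
  ext i j
  rw [mul_exchg_apply, exchg_mul_apply]
  simp only [Jsel1, Jsel2, Matrix.of_apply, Fin.val_rev]
  congr 1
  apply propext
  have := i.2
  have := j.2
  omega

/-- The phase relating the two halves of the augmented steering vector. -/
noncomputable def cph (M : ℕ) (μ φ : ℝ) : ℂ :=
  Complex.exp (-(2 * (φ : ℂ) * Complex.I)) * Complex.exp (-(Complex.I * ((M : ℂ) - 1) * (μ : ℂ)))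

lemma anc_inl (M : ℕ) (μ φ : ℝ) (k : Fin M) :
    ancvec M μ φ (Sum.inl k) 0 = Complex.exp (Complex.I * ((k : ℕ) : ℂ) * (μ : ℂ)) := by
  simp [ancvec, avec]

lemma anc_inr (M : ℕ) (μ φ : ℝ) (k : Fin M) :
    ancvec M μ φ (Sum.inr k) 0 =
      cph M μ φ * Complex.exp (Complex.I * ((k : ℕ) : ℂ) * (μ : ℂ)) := by
  simp only [ancvec, Matrix.fromRows_apply_inr, Matrix.smul_apply, smul_eq_mul, exchg_mul_apply,
    Matrix.map_apply, avec, Matrix.of_apply, cph, ← Complex.exp_conj, ← Complex.exp_add,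
    map_mul, Complex.conj_I, Complex.conj_ofReal, map_natCast, Fin.val_rev]
  congr 1
  have := k.2
  rw [Nat.cast_sub (by omega)]
  push_cast
  ring

/-- The unprojected, unscaled half vector. -/
noncomputable def bvec (M : ℕ) (μ : ℝ) (j : ℕ) : ℂ :=
  Complex.exp (-(Complex.I * (j : ℂ) * (μ : ℂ))) *
    ((if j = M - 1 then 1 else 0) - (if j = 0 then 1 else 0))

lemma sum_half (M : ℕ) (hM : 2 ≤ M) (μ : ℝ) (j : Fin M) :
    ∑ i : Fin (M - 1), Complex.exp (-(Complex.I * ((i : ℕ) : ℂ) * (μ : ℂ))) *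
      (Complex.exp (-(Complex.I * (μ : ℂ))) * Jsel2 M i j - Jsel1 M i j) = bvec M μ j := by
  simp only [Jsel1, Jsel2, Matrix.of_apply, mul_sub, Finset.sum_sub_distrib]
  rw [Fin.sum_univ_eq_sum_range (fun i : ℕ => Complex.exp (-(Complex.I * (i : ℂ) * (μ : ℂ))) *
      (Complex.exp (-(Complex.I * (μ : ℂ))) * if (j : ℕ) = i + 1 then 1 else 0)),
    Fin.sum_univ_eq_sum_range (fun i : ℕ => Complex.exp (-(Complex.I * (i : ℂ) * (μ : ℂ))) *
      if (j : ℕ) = i then 1 else 0)]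
  have h2 : ∑ i ∈ Finset.range (M - 1), Complex.exp (-(Complex.I * (i : ℂ) * (μ : ℂ))) *
      (if (j : ℕ) = i then 1 else 0) =
      Complex.exp (-(Complex.I * ((j : ℕ) : ℂ) * (μ : ℂ))) * (1 - if (j : ℕ) = M - 1 then 1 else 0) := by
    have := j.2
    by_cases h : (j : ℕ) = M - 1
    · rw [if_pos h, sub_self, mul_zero]
      apply Finset.sum_eq_zero
      intro i hi
      rw [Finset.mem_range] at hi
      rw [if_neg (by omega), mul_zero]
    · simp [h, show (j : ℕ) < M - 1 by omega]
  have h1 : ∑ i ∈ Finset.range (M - 1), Complex.exp (-(Complex.I * (i : ℂ) * (μ : ℂ))) *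
      (Complex.exp (-(Complex.I * (μ : ℂ))) * if (j : ℕ) = i + 1 then 1 else 0) =
      Complex.exp (-(Complex.I * ((j : ℕ) : ℂ) * (μ : ℂ))) * (1 - if (j : ℕ) = 0 then 1 else 0) := by
    have := j.2
    by_cases h : (j : ℕ) = 0
    · rw [if_pos h, sub_self, mul_zero]
      apply Finset.sum_eq_zero
      intro i hi
      rw [if_neg (by omega), mul_zero, mul_zero]
    · rw [Finset.sum_eq_single ((j : ℕ) - 1)]
      · rw [if_pos (by omega), if_neg h, mul_one, sub_zero, mul_one, ← Complex.exp_add]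
        congr 1
        rw [Nat.cast_sub (by omega)]
        push_cast
        ring
      · intro i _ hi
        rw [if_neg (by omega), mul_zero, mul_zero]
      · intro hi
        rw [Finset.mem_range] at hi
        omega
  rw [h1, h2, bvec]
  ring

lemma J1nc_eq (M : ℕ) : J1nc M = Matrix.fromBlocks (Jsel1 M) 0 0 (Jsel1 M) := by
  rw [J1nc, flip_Jsel2]

lemma J2nc_eq (M : ℕ) : J2nc M = Matrix.fromBlocks (Jsel2 M) 0 0 (Jsel2 M) := by
  rw [J2nc, flip_Jsel1]

lemma Jsel1_sum (M : ℕ) (i : Fin (M - 1)) (f : Fin M → ℂ) :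
    ∑ k, f k * Jsel1 M i k = f ⟨i, by omega⟩ := by
  rw [Finset.sum_eq_single ⟨i, by omega⟩]
  · simp [Jsel1]
  · intro b _ hb
    have : (b : ℕ) ≠ i := fun h => hb (Fin.ext h)
    simp [Jsel1, this]
  · simp

lemma conj_exp_nat (k : ℕ) (μ : ℝ) :
    (starRingEnd ℂ) (Complex.exp (Complex.I * (k : ℂ) * (μ : ℂ))) =
      Complex.exp (-(Complex.I * (k : ℂ) * (μ : ℂ))) := by
  rw [← Complex.exp_conj]
  simp

/-- The unprojected row vector. -/
noncomputable def wT (M : ℕ) (μ φ : ℝ) : Matrix (Fin 1) (Fin M ⊕ Fin M) ℂ :=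
  (ancvec M μ φ)ᴴ * (J1nc M)ᵀ * (Complex.exp (-(Complex.I * (μ : ℂ))) • J2nc M - J1nc M)

lemma wT_inl (M : ℕ) (hM : 2 ≤ M) (μ φ : ℝ) (j : Fin M) :
    wT M μ φ 0 (Sum.inl j) = bvec M μ j := by
  rw [wT, J1nc_eq, J2nc_eq, ← sum_half M hM]
  simp only [Matrix.mul_apply, Fintype.sum_sum_type, Matrix.conjTranspose_apply,
    Matrix.transpose_apply, Matrix.sub_apply, Matrix.smul_apply, Matrix.fromBlocks_apply₁₁,
    Matrix.fromBlocks_apply₁₂, Matrix.fromBlocks_apply₂₁, Matrix.fromBlocks_apply₂₂,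
    Matrix.zero_apply, mul_zero, Finset.sum_const_zero, add_zero, zero_add, smul_eq_mul,
    sub_zero, smul_zero, Jsel1_sum, anc_inl, anc_inr]
  simp [conj_exp_nat]

lemma wT_inr (M : ℕ) (hM : 2 ≤ M) (μ φ : ℝ) (j : Fin M) :
    wT M μ φ 0 (Sum.inr j) = (starRingEnd ℂ) (cph M μ φ) * bvec M μ j := by
  rw [wT, J1nc_eq, J2nc_eq, ← sum_half M hM, Finset.mul_sum]
  simp only [Matrix.mul_apply, Fintype.sum_sum_type, Matrix.conjTranspose_apply,
    Matrix.transpose_apply, Matrix.sub_apply, Matrix.smul_apply, Matrix.fromBlocks_apply₁₁,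
    Matrix.fromBlocks_apply₁₂, Matrix.fromBlocks_apply₂₁, Matrix.fromBlocks_apply₂₂,
    Matrix.zero_apply, mul_zero, Finset.sum_const_zero, add_zero, zero_add, smul_eq_mul,
    sub_zero, smul_zero, Jsel1_sum, anc_inl, anc_inr]
  simp only [star_mul', RCLike.star_def, conj_exp_nat]
  simp only [mul_assoc]

lemma sum_ends (M : ℕ) (hM : 2 ≤ M) (f : ℕ → ℂ)
    (hf : ∀ k, k ≠ 0 → k ≠ M - 1 → f k = 0) :
    ∑ j : Fin M, f j = f 0 + f (M - 1) := by
  rw [Fin.sum_univ_eq_sum_range f]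
  have h : ({0, M - 1} : Finset ℕ) ⊆ Finset.range M := by
    intro x hx
    simp only [Finset.mem_insert, Finset.mem_singleton] at hx
    rw [Finset.mem_range]
    omega
  rw [← Finset.sum_subset h, Finset.sum_pair (by omega)]
  intro x _ hx
  simp only [Finset.mem_insert, Finset.mem_singleton, not_or] at hx
  exact hf x hx.1 hx.2

lemma bvec_zero (M : ℕ) (hM : 2 ≤ M) (μ : ℝ) : bvec M μ 0 = -1 := by
  simp [bvec, show ¬ (0 = M - 1) by omega]

lemma bvec_last (M : ℕ) (hM : 2 ≤ M) (μ : ℝ) :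
    bvec M μ (M - 1) = Complex.exp (-(Complex.I * ((M : ℂ) - 1) * (μ : ℂ))) := by
  simp [bvec, show ¬ (M - 1 = 0) by omega, Nat.cast_sub (show 1 ≤ M by omega)]

lemma bvec_mid (M : ℕ) (μ : ℝ) (k : ℕ) (h0 : k ≠ 0) (h1 : k ≠ M - 1) : bvec M μ k = 0 := by
  simp [bvec, h0, h1]

lemma b_dot_a (M : ℕ) (hM : 2 ≤ M) (μ : ℝ) :
    ∑ j : Fin M, bvec M μ j * Complex.exp (Complex.I * ((j : ℕ) : ℂ) * (μ : ℂ)) = 0 := by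
  rw [sum_ends M hM (fun j => bvec M μ j * Complex.exp (Complex.I * (j : ℂ) * (μ : ℂ)))]
  · rw [bvec_zero M hM, bvec_last M hM, ← Complex.exp_add, Nat.cast_sub (by omega)]
    simp
  · intro k h0 h1
    simp [bvec_mid M μ k h0 h1]

lemma wT_anc (M : ℕ) (hM : 2 ≤ M) (μ φ : ℝ) : wT M μ φ * ancvec M μ φ = 0 := by
  ext i j
  fin_cases i
  fin_cases j
  simp only [Fin.zero_eta, Matrix.mul_apply, Fintype.sum_sum_type, wT_inl M hM, wT_inr M hM,
    anc_inl, anc_inr, Matrix.zero_apply, b_dot_a M hM, zero_add]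
  have : ∀ x : Fin M, (starRingEnd ℂ) (cph M μ φ) * bvec M μ x *
      (cph M μ φ * Complex.exp (Complex.I * ((x : ℕ) : ℂ) * (μ : ℂ))) =
      ((starRingEnd ℂ) (cph M μ φ) * cph M μ φ) *
      (bvec M μ x * Complex.exp (Complex.I * ((x : ℕ) : ℂ) * (μ : ℂ))) := fun x => by ring
  simp only [this, ← Finset.mul_sum, b_dot_a M hM, mul_zero]

lemma vT_eq (M : ℕ) (hM : 2 ≤ M) (μ φ : ℝ) :
    vT M μ φ = (((Real.sqrt (2 * M) : ℝ) : ℂ) / (2 * ((M : ℂ) - 1))) • wT M μ φ := by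
  have h : wT M μ φ * Pperp M μ φ = wT M μ φ := by
    rw [Pperp, Matrix.mul_sub, Matrix.mul_smul, ← Matrix.mul_assoc, wT_anc M hM]
    simp
  rw [vT]
  change _ • (wT M μ φ * Pperp M μ φ) = _
  rw [h]

lemma normSq_exp_neg (x : ℝ) : Complex.normSq (Complex.exp (-(Complex.I * x))) = 1 := by
  rw [Complex.normSq_eq_norm_sq, Complex.norm_exp]
  simp

lemma normSq_cph (M : ℕ) (μ φ : ℝ) : Complex.normSq (cph M μ φ) = 1 := by
  rw [cph, map_mul]
  have h1 : -(2 * (φ : ℂ) * Complex.I) = -(Complex.I * ((2 * φ : ℝ) : ℂ)) := by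
    push_cast; ring
  have h2 : -(Complex.I * ((M : ℂ) - 1) * (μ : ℂ)) = -(Complex.I * ((((M : ℝ) - 1) * μ : ℝ) : ℂ)) := by
    push_cast; ring
  rw [h1, h2, normSq_exp_neg, normSq_exp_neg, one_mul]

lemma normSq_b (M : ℕ) (hM : 2 ≤ M) (μ : ℝ) :
    ∑ j : Fin M, Complex.normSq (bvec M μ j) = 2 := by
  have h := sum_ends M hM (fun j => ((Complex.normSq (bvec M μ j) : ℝ) : ℂ)) (by
    intro k h0 h1
    simp [bvec_mid M μ k h0 h1])
  have h2 : -(Complex.I * ((M : ℂ) - 1) * (μ : ℂ)) = -(Complex.I * ((((M : ℝ) - 1) * μ : ℝ) : ℂ)) := by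
    push_cast; ring
  rw [bvec_zero M hM, bvec_last M hM, h2, normSq_exp_neg] at h
  have h3 : (((∑ j : Fin M, Complex.normSq (bvec M μ j) : ℝ)) : ℂ) = ((2 : ℝ) : ℂ) := by
    push_cast
    rw [h]
    norm_num
  exact_mod_cast h3

lemma kappa_sq (M : ℕ) :
    (((Real.sqrt (2 * M) : ℝ) : ℂ) / (2 * ((M : ℂ) - 1))) ^ 2 =
      (((2 * M) / (4 * ((M : ℝ) - 1) ^ 2) : ℝ) : ℂ) := by
  rw [div_pow, ← Complex.ofReal_pow, Real.sq_sqrt (by positivity)]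
  push_cast
  ring

lemma normSq_kappa (M : ℕ) :
    Complex.normSq (((Real.sqrt (2 * M) : ℝ) : ℂ) / (2 * ((M : ℂ) - 1))) =
      (2 * M) / (4 * ((M : ℝ) - 1) ^ 2) := by
  have : (((Real.sqrt (2 * M) : ℝ) : ℂ) / (2 * ((M : ℂ) - 1))) =
      ((Real.sqrt (2 * M) / (2 * ((M : ℝ) - 1)) : ℝ) : ℂ) := by push_cast; rfl
  rw [this, Complex.normSq_ofReal, ← sq, div_pow, Real.sq_sqrt (by positivity)]
  ring

lemma normSq_v (M : ℕ) (hM : 2 ≤ M) (μ φ : ℝ) :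
    ∑ j, Complex.normSq (vT M μ φ 0 j) = 2 * M / ((M : ℝ) - 1) ^ 2 := by
  simp only [vT_eq M hM, Matrix.smul_apply, smul_eq_mul, map_mul, ← Finset.mul_sum, normSq_kappa,
    Fintype.sum_sum_type, wT_inl M hM, wT_inr M hM, Complex.normSq_conj, normSq_cph, one_mul,
    normSq_b M hM]
  have : ((M : ℝ) - 1) ≠ 0 := by
    have : (2 : ℝ) ≤ M := by exact_mod_cast hM
    intro h; linarith
  field_simp
  ring

lemma b_flip (M : ℕ) (hM : 2 ≤ M) (μ : ℝ) :
    ∑ j : Fin M, bvec M μ j.rev * bvec M μ j =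
      -2 * Complex.exp (-(Complex.I * ((M : ℂ) - 1) * (μ : ℂ))) := by
  simp only [Fin.val_rev]
  rw [sum_ends M hM (fun j => bvec M μ (M - (j + 1)) * bvec M μ j)]
  · simp only [zero_add, show M - (M - 1 + 1) = 0 by omega, bvec_zero M hM, bvec_last M hM]
    ring
  · intro k h0 h1
    simp [bvec_mid M μ k h0 h1]

lemma v_Pi_v (M : ℕ) (hM : 2 ≤ M) (μ φ : ℝ) :
    (vT M μ φ * Pi2M M * (vT M μ φ)ᵀ) 0 0 =
      -((2 * M / ((M : ℝ) - 1) ^ 2 : ℝ) : ℂ) * Complex.exp (2 * (φ : ℂ) * Complex.I) := by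
  have hM1 : ((M : ℝ) - 1) ≠ 0 := by
    have : (2 : ℝ) ≤ M := by exact_mod_cast hM
    intro h; linarith
  have hl : ∀ j, (vT M μ φ * Pi2M M) 0 (Sum.inl j) = vT M μ φ 0 (Sum.inr j.rev) := by
    intro j
    have h := mul_exchg_apply (Matrix.of fun (_ : Fin 1) k => vT M μ φ 0 (Sum.inr k)) 0 j
    rw [Matrix.of_apply] at h
    rw [← h]
    simp [Matrix.mul_apply, Pi2M]
  have hr : ∀ j, (vT M μ φ * Pi2M M) 0 (Sum.inr j) = vT M μ φ 0 (Sum.inl j.rev) := by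
    intro j
    have h := mul_exchg_apply (Matrix.of fun (_ : Fin 1) k => vT M μ φ 0 (Sum.inl k)) 0 j
    rw [Matrix.of_apply] at h
    rw [← h]
    simp [Matrix.mul_apply, Pi2M]
  rw [Matrix.mul_apply, Fintype.sum_sum_type]
  simp only [hl, hr, Matrix.transpose_apply]
  simp only [vT_eq M hM, Matrix.smul_apply, smul_eq_mul,
    wT_inl M hM, wT_inr M hM]
  set κ : ℂ := (((Real.sqrt (2 * M) : ℝ) : ℂ) / (2 * ((M : ℂ) - 1))) with hκ
  have e1 : ∀ j : Fin M, κ * ((starRingEnd ℂ) (cph M μ φ) * bvec M μ j.rev) * (κ * bvec M μ j) =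
      κ ^ 2 * (starRingEnd ℂ) (cph M μ φ) * (bvec M μ j.rev * bvec M μ j) := fun j => by ring
  have e2 : ∀ j : Fin M, κ * bvec M μ j.rev * (κ * ((starRingEnd ℂ) (cph M μ φ) * bvec M μ j)) =
      κ ^ 2 * (starRingEnd ℂ) (cph M μ φ) * (bvec M μ j.rev * bvec M μ j) := fun j => by ring
  simp only [e1, e2, ← Finset.mul_sum, b_flip M hM]
  have hc : (starRingEnd ℂ) (cph M μ φ) * Complex.exp (-(Complex.I * ((M : ℂ) - 1) * (μ : ℂ))) =
      Complex.exp (2 * (φ : ℂ) * Complex.I) := by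
    rw [cph, map_mul, ← Complex.exp_conj, ← Complex.exp_conj, ← Complex.exp_add, ← Complex.exp_add]
    congr 1
    have h2 : (starRingEnd ℂ) (2 : ℂ) = 2 := Complex.conj_ofReal 2
    simp [h2]
  rw [hκ, kappa_sq, ← hc]
  have : ((2 * M / ((M : ℝ) - 1) ^ 2 : ℝ) : ℂ) = 4 * (((2 * M) / (4 * ((M : ℝ) - 1) ^ 2) : ℝ) : ℂ) := by
    rw [show (4 : ℂ) = ((4 : ℝ) : ℂ) by norm_num, ← Complex.ofReal_mul]
    congr 1
    field_simp
  rw [this]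
  ring

/-- the mean squared error of 1-D NC Standard ESPRIT for a single
strictly non-circular source in circularly symmetric white noise of variance `σ²`,
`(σ²/2) (‖s̃‖² ‖v‖² − Re{(s̃ᵀ s̃)(vᵀ Π_{2M} v)})`, equals
`(σ²/(N P)) · 1/(M − 1)²`, i.e. the reciprocal effective SNR times `M/(M (M − 1)²)`. -/
theorem single_source_nc_esprit_mse
    (M N : ℕ) (hM : 2 ≤ M) (hN : 1 ≤ N) (μ φ σ : ℝ) (hσ : 0 < σ)
    (s0 : Fin N → ℝ) (hs0 : s0 ≠ 0)
    (P : ℝ) (hP : P = (∑ t, (s0 t) ^ 2) / N) :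
    (σ ^ 2 / 2) *
        ((∑ t, Complex.normSq (stilde M N φ P s0 t)) *
            (∑ j, Complex.normSq (vT M μ φ 0 j)) -
          ((∑ t, (stilde M N φ P s0 t) ^ 2) *
            ((vT M μ φ * Pi2M M * (vT M μ φ)ᵀ) 0 0)).re)
      = (σ ^ 2 / ((N : ℝ) * P)) * ((M : ℝ) / ((M : ℝ) * ((M : ℝ) - 1) ^ 2)) := by
  have hMr : (2 : ℝ) ≤ M := by exact_mod_cast hM
  have hM1 : ((M : ℝ) - 1) ≠ 0 := by intro h; linarith
  have hM0 : (M : ℝ) ≠ 0 := by intro h; linarith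
  have hN0 : (N : ℝ) ≠ 0 := by
    have : (1 : ℝ) ≤ N := by exact_mod_cast hN
    intro h; linarith
  have hS : (N : ℝ) * P = ∑ t, (s0 t) ^ 2 := by
    rw [hP]; field_simp
  have hSpos : 0 < (N : ℝ) * P := by
    rw [hS]
    obtain ⟨t, ht⟩ := Function.ne_iff.mp hs0
    have ht' : s0 t ≠ 0 := by simpa using ht
    exact Finset.sum_pos' (fun i _ => sq_nonneg _) ⟨t, Finset.mem_univ _, by positivity⟩
  have hD : (Real.sqrt (2 * M * N * P) * Real.sqrt (N * P)) ^ 2 = 2 * M * (N * P) ^ 2 := by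
    rw [mul_pow, Real.sq_sqrt hSpos.le, Real.sq_sqrt]
    · ring
    · rw [mul_assoc]; positivity
  have hs1 : ∑ t, Complex.normSq (stilde M N φ P s0 t) = 1 / (2 * M * (N * P)) := by
    have : ∀ t, Complex.normSq (stilde M N φ P s0 t) = (s0 t) ^ 2 / (2 * M * (N * P) ^ 2) := by
      intro t
      rw [stilde, Complex.normSq_div, Complex.normSq_conj, Complex.normSq_mul,
        Complex.normSq_ofReal, Complex.normSq_ofReal, ← sq, ← sq, hD,
        Complex.normSq_eq_norm_sq, Complex.norm_exp]
      simp
    simp only [this]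
    rw [← Finset.sum_div, ← hS]
    field_simp
  have hs2 : ∑ t, (stilde M N φ P s0 t) ^ 2 =
      ((1 / (2 * M * (N * P)) : ℝ) : ℂ) * Complex.exp (-(2 * (φ : ℂ) * Complex.I)) := by
    have : ∀ t, (stilde M N φ P s0 t) ^ 2 = (((s0 t) ^ 2 / (2 * M * (N * P) ^ 2) : ℝ) : ℂ) *
        Complex.exp (-(2 * (φ : ℂ) * Complex.I)) := by
      intro t
      rw [stilde, div_pow, ← Complex.ofReal_pow, hD, map_mul, ← Complex.exp_conj, mul_pow,
        ← Complex.exp_nat_mul, Complex.conj_ofReal, Complex.ofReal_div, Complex.ofReal_pow]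
      rw [show ((2 : ℕ) : ℂ) * (starRingEnd ℂ) (Complex.I * (φ : ℂ)) =
        -(2 * (φ : ℂ) * Complex.I) by simp; ring]
      ring
    simp only [this]
    rw [← Finset.sum_mul, ← Complex.ofReal_sum, ← Finset.sum_div, ← hS]
    congr 2
    field_simp
  rw [hs1, hs2, normSq_v M hM, v_Pi_v M hM]
  have hprod : ((1 / (2 * M * (N * P)) : ℝ) : ℂ) * Complex.exp (-(2 * (φ : ℂ) * Complex.I)) *
      (-((2 * M / ((M : ℝ) - 1) ^ 2 : ℝ) : ℂ) * Complex.exp (2 * (φ : ℂ) * Complex.I)) =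
      ((-(1 / (2 * M * (N * P)) * (2 * M / ((M : ℝ) - 1) ^ 2)) : ℝ) : ℂ) := by
    have he : Complex.exp (-(2 * (φ : ℂ) * Complex.I)) * Complex.exp (2 * (φ : ℂ) * Complex.I) = 1 := by
      rw [← Complex.exp_add]; simp
    rw [Complex.ofReal_neg, Complex.ofReal_mul]
    linear_combination (-((1 / (2 * M * (N * P)) : ℝ) : ℂ) * ((2 * M / ((M : ℝ) - 1) ^ 2 : ℝ) : ℂ)) * he
  rw [hprod, Complex.ofReal_re]
  have hP0 : P ≠ 0 := by rintro rfl; simp at hSpos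
  field_simp
  ring
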